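/- (Fáry's averaged-projection formula) Let γ : I → ℝ^d be a continuous curve, let 1 ≤ k < d, let π_k : ℝ^d → ℝ^k denote the orthogonal projection onto the first k coordinates, and let μ be the Haar probability measure on the orthogonal group O(d). Then TC(γ) = ∫_{O(d)} TC(π_k ∘ g ∘ γ) dμ(g), as an identity in [0,∞]. In words: the total curvature of γ equals the average total curvature of its orthogonal projections to k-planes. -/

import Mathlib

open Set Filter MeasureTheory
open scoped ENNReal NNReal RealInnerProductSpace

noncomputable section

/-- The parameters `u 0 < u 1 < ⋯ < u m` of a polygon inscribed in (the restriction to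
`[a,b]` of) a curve: strictly increasing parameters lying in `[a,b]`. -/
def InscribedIn (a b : ℝ) (m : ℕ) (u : ℕ → ℝ) : Prop :=
  (∀ i < m, u i < u (i + 1)) ∧ ∀ i ≤ m, u i ∈ Set.Icc a b

/-- The length of the polygon inscribed in the curve `γ` with parameters `u 0, …, u m`:
the sum of the euclidean lengths of its edges. -/
def polyLen {E : Type*} [NormedAddCommGroup E] (γ : ℝ → E) (m : ℕ) (u : ℕ → ℝ) : ℝ :=
  ∑ i ∈ Finset.range m, ‖γ (u (i + 1)) - γ (u i)‖

/-- The (Jordan) length of the arc `γ : [a,b] → E`: the supremum of the lengths of all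
inscribed polygons, valued in `[0,∞]`. -/
def arcLen {E : Type*} [NormedAddCommGroup E] (γ : ℝ → E) (a b : ℝ) : ℝ≥0∞ :=
  ⨆ (m : ℕ) (u : ℕ → ℝ) (_ : InscribedIn a b m u), ENNReal.ofReal (polyLen γ m u)

/-- The list of vertices of the polygon inscribed in `γ` with parameters `u 0, …, u m`. -/
def vertexList {E : Type*} (γ : ℝ → E) (m : ℕ) (u : ℕ → ℝ) : List E :=
  (List.range (m + 1)).map fun i => γ (u i)

/-- Collapse consecutive equal entries of a list to single entries. -/
def collapse {E : Type*} (l : List E) : List E :=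
  @List.destutter E (· ≠ ·) (Classical.decRel _) l

/-- The sum of the turning angles of a polygon given by its list of vertices: at each
interior vertex, the angle in `[0,π]` between the incoming and outgoing edge vectors. -/
def turnSum {E : Type*} [NormedAddCommGroup E] [InnerProductSpace ℝ E] : List E → ℝ
  | a :: b :: c :: l => InnerProductGeometry.angle (b - a) (c - b) + turnSum (b :: c :: l)
  | _ => 0

/-- The sum, at each interior vertex, of the euclidean distance `‖u₊ - u₋‖` between the
unit tangent vectors of the incoming and outgoing edges (so a corner of turning angle θ
contributes `2 sin(θ/2)`). -/
def starSum {E : Type*} [NormedAddCommGroup E] [InnerProductSpace ℝ E] : List E → ℝ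
  | a :: b :: c :: l =>
      ‖(‖c - b‖⁻¹ • (c - b)) - (‖b - a‖⁻¹ • (b - a))‖ + starSum (b :: c :: l)
  | _ => 0

/-- The total curvature of the polygon inscribed in `γ` with parameters `u 0, …, u m`:
after collapsing consecutive equal vertices, the sum of its turning angles. -/
def polyTC {E : Type*} [NormedAddCommGroup E] [InnerProductSpace ℝ E]
    (γ : ℝ → E) (m : ℕ) (u : ℕ → ℝ) : ℝ :=
  turnSum (collapse (vertexList γ m u))

/-- The total curvature of the arc `γ : [a,b] → E`: the supremum over all inscribed
polygons of their total curvature, valued in `[0,∞]`. -/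
def arcTC {E : Type*} [NormedAddCommGroup E] [InnerProductSpace ℝ E]
    (γ : ℝ → E) (a b : ℝ) : ℝ≥0∞ :=
  ⨆ (m : ℕ) (u : ℕ → ℝ) (_ : InscribedIn a b m u), ENNReal.ofReal (polyTC γ m u)

/-- The euclidean total curvature `TC*` of the polygon inscribed in `γ` with parameters
`u 0, …, u m`. -/
def polyTCStar {E : Type*} [NormedAddCommGroup E] [InnerProductSpace ℝ E]
    (γ : ℝ → E) (m : ℕ) (u : ℕ → ℝ) : ℝ :=
  starSum (collapse (vertexList γ m u))

/-- The euclidean total curvature `TC*` of the arc `γ : [a,b] → E`. -/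
def arcTCStar {E : Type*} [NormedAddCommGroup E] [InnerProductSpace ℝ E]
    (γ : ℝ → E) (a b : ℝ) : ℝ≥0∞ :=
  ⨆ (m : ℕ) (u : ℕ → ℝ) (_ : InscribedIn a b m u), ENNReal.ofReal (polyTCStar γ m u)

/-- Cyclically ordered parameters `u 0 < ⋯ < u m` in `[0,1)` of a polygon inscribed in a
loop `γ : ℝ/ℤ → E`. -/
def LoopInscribed (m : ℕ) (u : ℕ → ℝ) : Prop :=
  (∀ i < m, u i < u (i + 1)) ∧ ∀ i ≤ m, u i ∈ Set.Ico (0 : ℝ) 1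

/-- The list of vertices of the polygon inscribed in the loop `γ` with parameters
`u 0, …, u m`. -/
def loopVertexList {E : Type*} (γ : AddCircle (1 : ℝ) → E) (m : ℕ) (u : ℕ → ℝ) : List E :=
  (List.range (m + 1)).map fun i => γ (u i : ℝ)

/-- The sum of the lengths of the successive edges of a list of points. -/
def lenList {E : Type*} [NormedAddCommGroup E] : List E → ℝ
  | a :: b :: l => ‖b - a‖ + lenList (b :: l)
  | _ => 0

/-- The length of the closed polygon inscribed in the loop `γ` with parameters
`u 0, …, u m`: the sum of the edge lengths, indices taken cyclically. -/
def loopPolyLen {E : Type*} [NormedAddCommGroup E]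
    (γ : AddCircle (1 : ℝ) → E) (m : ℕ) (u : ℕ → ℝ) : ℝ :=
  lenList (loopVertexList γ m u ++ (loopVertexList γ m u).take 1)

/-- The length of a loop `γ : ℝ/ℤ → E`: the supremum of the lengths of inscribed closed
polygons, valued in `[0,∞]`. -/
def loopLen {E : Type*} [NormedAddCommGroup E] (γ : AddCircle (1 : ℝ) → E) : ℝ≥0∞ :=
  ⨆ (m : ℕ) (u : ℕ → ℝ) (_ : LoopInscribed m u), ENNReal.ofReal (loopPolyLen γ m u)

open Classical in
/-- Collapse consecutive equal vertices of a *cyclic* list of vertices: collapse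
consecutive duplicates, also across the wrap-around. -/
def cyclicCollapse {E : Type*} (l : List E) : List E :=
  if 2 ≤ (collapse l).length ∧ (collapse l).getLast? = (collapse l).head? then
    (collapse l).dropLast
  else collapse l

/-- The total curvature of the closed polygon inscribed in the loop `γ` with parameters
`u 0, …, u m`: after cyclically collapsing consecutive equal vertices, the sum of the
turning angles at all of its vertices (every vertex of a closed polygon is interior). -/
def loopPolyTC {E : Type*} [NormedAddCommGroup E] [InnerProductSpace ℝ E]
    (γ : AddCircle (1 : ℝ) → E) (m : ℕ) (u : ℕ → ℝ) : ℝ :=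
  turnSum (cyclicCollapse (loopVertexList γ m u) ++
    (cyclicCollapse (loopVertexList γ m u)).take 2)

/-- The total curvature of a loop `γ : ℝ/ℤ → E`: the supremum over all inscribed closed
polygons of their total curvature, valued in `[0,∞]`. -/
def loopTC {E : Type*} [NormedAddCommGroup E] [InnerProductSpace ℝ E]
    (γ : AddCircle (1 : ℝ) → E) : ℝ≥0∞ :=
  ⨆ (m : ℕ) (u : ℕ → ℝ) (_ : LoopInscribed m u), ENNReal.ofReal (loopPolyTC γ m u)

/-- The euclidean total curvature `TC*` of the closed inscribed polygon. -/
def loopPolyTCStar {E : Type*} [NormedAddCommGroup E] [InnerProductSpace ℝ E]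
    (γ : AddCircle (1 : ℝ) → E) (m : ℕ) (u : ℕ → ℝ) : ℝ :=
  starSum (cyclicCollapse (loopVertexList γ m u) ++
    (cyclicCollapse (loopVertexList γ m u)).take 2)

/-- The euclidean total curvature `TC*` of a loop `γ : ℝ/ℤ → E`. -/
def loopTCStar {E : Type*} [NormedAddCommGroup E] [InnerProductSpace ℝ E]
    (γ : AddCircle (1 : ℝ) → E) : ℝ≥0∞ :=
  ⨆ (m : ℕ) (u : ℕ → ℝ) (_ : LoopInscribed m u), ENNReal.ofReal (loopPolyTCStar γ m u)

end

instance (d : ℕ) : MeasurableSpace (Matrix (Fin d) (Fin d) ℝ) :=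
  inferInstanceAs (MeasurableSpace (Fin d → Fin d → ℝ))

section Fary
open InnerProductGeometry

/-- turning sum with incoming direction `u` (0 for none), current point `a`. -/
noncomputable def ang0 {E : Type*} [NormedAddCommGroup E] [InnerProductSpace ℝ E] (u v : E) : ℝ :=
  open Classical in if u = 0 then 0 else angle u v

open Classical in
/-- turning sum, started with incoming direction `u` and current point `a`. -/
noncomputable def turnFrom {E : Type*} [NormedAddCommGroup E] [InnerProductSpace ℝ E] :
    E → E → List E → ℝ
  | _, _, [] => 0
  | u, a, b :: l => if b = a then turnFrom u a l else ang0 u (b - a) + turnFrom (b - a) b l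

variable {E : Type*} [NormedAddCommGroup E] [InnerProductSpace ℝ E]

lemma ang0_nonneg (u v : E) : 0 ≤ ang0 u v := by
  unfold ang0; split_ifs
  · exact le_rfl
  · exact angle_nonneg _ _

lemma ang0_le (u v w : E) : ang0 u w ≤ ang0 u v + angle v w := by
  unfold ang0; split_ifs
  · simpa using angle_nonneg _ _
  · exact angle_le_angle_add_angle _ _ _

lemma turnFrom_nonneg (u a : E) (l : List E) : 0 ≤ turnFrom u a l := by
  induction l generalizing u a with
  | nil => simp [turnFrom]
  | cons b l ih =>
    unfold turnFrom; split_ifs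
    · exact ih _ _
    · exact add_nonneg (ang0_nonneg _ _) (ih _ _)

lemma turnFrom_lip (u v a : E) (hv : v ≠ 0) (l : List E) :
    turnFrom u a l ≤ ang0 u v + turnFrom v a l := by
  induction l with
  | nil => simpa [turnFrom] using ang0_nonneg u v
  | cons b l ih =>
    unfold turnFrom; split_ifs with h
    · exact ih
    · have := ang0_le u v (b - a)
      have h2 : ang0 v (b - a) = angle v (b - a) := by simp [ang0, hv]
      rw [h2]; linarith

lemma turnFrom_insert (u a x : E) (l : List E) : turnFrom u a l ≤ turnFrom u a (x :: l) := by
  rw [turnFrom]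
  split_ifs with hx
  · exact le_rfl
  have hxa : x - a ≠ 0 := sub_ne_zero.2 hx
  cases l with
  | nil => simpa [turnFrom] using ang0_nonneg _ _
  | cons b l =>
    by_cases hba : b = a
    · subst hba
      have hbx : b ≠ x := fun h => hx h.symm
      have h1 : b - x ≠ 0 := sub_ne_zero.2 hbx
      simp only [turnFrom, if_true, if_neg hbx]
      have := turnFrom_lip u (b - x) b h1 l
      have h2 := ang0_le u (x - b) (b - x)
      have h3 : ang0 (x - b) (b - x) = angle (x - b) (b - x) := by simp [ang0, hxa]
      rw [h3]; linarith
    · by_cases hbx : b = x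
      · subst hbx
        simp only [turnFrom, if_true, if_neg hba]; exact le_rfl
      · have h1 : b - x ≠ 0 := sub_ne_zero.2 hbx
        have h0 : b - a ≠ 0 := sub_ne_zero.2 hba
        simp only [turnFrom, if_neg hba, if_neg hbx]
        have h3 : ang0 (x - a) (b - x) = angle (x - a) (b - x) := by simp [ang0, hxa]
        have h4 := turnFrom_lip (b - a) (b - x) b h1 l
        have h5 : ang0 (b - a) (b - x) = angle (b - a) (b - x) := by simp [ang0, h0]
        have h6 := angle_eq_angle_add_add_angle_add (x - a) h1
        rw [show x - a + (b - x) = b - a by abel] at h6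
        have h7 := ang0_le u (x - a) (b - a)
        rw [angle_comm (b - x)] at h6
        rw [h3]; linarith

lemma turnFrom_sublist {l l' : List E} (h : l.Sublist l') (u a : E) :
    turnFrom u a l ≤ turnFrom u a l' := by
  induction h generalizing u a with
  | slnil => exact le_rfl
  | cons x _ ih => exact (ih u a).trans (turnFrom_insert _ _ _ _)
  | cons_cons x _ ih =>
    unfold turnFrom; split_ifs
    · exact ih _ _
    · have := ih (x - a) x
      linarith

/-- total turning of a list after collapsing -/
noncomputable def turnL {E : Type*} [NormedAddCommGroup E] [InnerProductSpace ℝ E] : List E → ℝ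
  | [] => 0
  | a :: l => turnFrom 0 a l

lemma turnL_nonneg (l : List E) : 0 ≤ turnL l := by
  cases l with
  | nil => exact le_rfl
  | cons a l => exact turnFrom_nonneg _ _ _

lemma turnL_insert (x : E) (l : List E) : turnL l ≤ turnL (x :: l) := by
  cases l with
  | nil => exact turnFrom_nonneg _ _ _
  | cons b l =>
    simp only [turnL, turnFrom]
    split_ifs with h
    · rw [h]
    · have := turnFrom_lip 0 (b - x) b (sub_ne_zero.2 h) l
      linarith

lemma turnL_sublist {l l' : List E} (h : l.Sublist l') : turnL l ≤ turnL l' := by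
  induction h with
  | slnil => exact le_rfl
  | cons x _ ih => exact ih.trans (turnL_insert _ _)
  | cons_cons x h _ => exact turnFrom_sublist h _ _

lemma destutter'_head {α : Type*} (R : α → α → Prop) [DecidableRel R] (a : α) (l : List α) :
    ∃ t, List.destutter' R a l = a :: t := by
  induction l with
  | nil => exact ⟨[], by simp [List.destutter']⟩
  | cons b l ih =>
    rw [List.destutter'_cons]; split_ifs
    · exact ⟨_, rfl⟩
    · exact ih

lemma turnSum_destutter' (c a : E) (hca : a ≠ c) (l : List E) :
    turnSum (c :: @List.destutter' E (· ≠ ·) (Classical.decRel _) a l) = turnFrom (a - c) a l := by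
  let _ := Classical.decRel (fun x y : E => x ≠ y)
  induction l generalizing a c with
  | nil => simp [List.destutter', turnSum, turnFrom]
  | cons b l ih =>
    rw [List.destutter'_cons, turnFrom]
    by_cases h : b = a
    · rw [if_neg (by simpa using h.symm), if_pos h]; exact ih _ _ hca
    · rw [if_pos (Ne.symm h), if_neg h]
      rw [← ih a b h]
      obtain ⟨t, ht⟩ := destutter'_head (fun x y : E => x ≠ y) b l
      rw [ht, turnSum]
      simp [ang0, sub_ne_zero.2 hca]

lemma turnSum_collapse (l : List E) : turnSum (collapse l) = turnL l := by
  let _ := Classical.decRel (fun x y : E => x ≠ y)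
  cases l with
  | nil => simp [collapse, turnSum, turnL]
  | cons a l =>
    unfold collapse
    rw [List.destutter_cons']
    induction l with
    | nil => simp [List.destutter', turnSum, turnL, turnFrom]
    | cons b l ih =>
      rw [List.destutter'_cons, turnL, turnFrom]
      by_cases h : b = a
      · rw [if_neg (by simpa using h.symm), if_pos h]; exact ih
      · rw [if_pos (Ne.symm h), if_neg h, turnSum_destutter' _ _ h]
        simp [ang0]

lemma polyTC_eq (γ : ℝ → E) (m : ℕ) (u : ℕ → ℝ) :
    polyTC γ m u = turnL ((List.range (m + 1)).map fun i => γ (u i)) := turnSum_collapse _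

lemma turnFrom_lsc {α : Type*} (l : List α) (u a : E) (c : α → E) (un an : ℕ → E)
    (cn : ℕ → α → E) (hu : Tendsto un atTop (nhds u)) (ha : Tendsto an atTop (nhds a))
    (hc : ∀ t ∈ l, Tendsto (fun n => cn n t) atTop (nhds (c t))) (ε : ℝ) (hε : 0 < ε) :
    ∀ᶠ n in atTop, turnFrom u a (l.map c) - ε ≤ turnFrom (un n) (an n) (l.map (cn n)) := by
  induction l generalizing u a un an ε with
  | nil => exact Eventually.of_forall fun n => by simp [turnFrom, hε.le]
  | cons b l ih =>
    have hc' : ∀ t ∈ l, Tendsto (fun n => cn n t) atTop (nhds (c t)) :=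
      fun t ht => hc t (List.mem_cons_of_mem _ ht)
    have hb := hc b List.mem_cons_self
    simp only [List.map_cons]
    by_cases h : c b = a
    · filter_upwards [ih u a un an hu ha hc' ε hε] with n hn
      rw [turnFrom, if_pos h]
      exact hn.trans (turnFrom_insert _ _ _ _)
    · have hsub := hb.sub ha
      have h0 : c b - a ≠ 0 := sub_ne_zero.2 h
      have hne : ∀ᶠ n in atTop, cn n b - an n ≠ 0 := hsub.eventually_ne h0
      have hang : ∀ᶠ n in atTop, ang0 u (c b - a) - ε / 2 ≤ ang0 (un n) (cn n b - an n) := by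
        by_cases hu0 : u = 0
        · refine Eventually.of_forall fun n => ?_
          have := ang0_nonneg (un n) (cn n b - an n)
          simp only [ang0, if_pos hu0] at this ⊢
          linarith
        · have h1 := (continuousAt_angle (x := (u, c b - a)) hu0 h0).tendsto.comp
            (hu.prodMk_nhds hsub)
          have h2 := h1.eventually (eventually_ge_nhds (show angle u (c b - a) - ε / 2 <
            angle u (c b - a) by linarith))
          filter_upwards [h2, hu.eventually_ne hu0] with n hn hn0
          simpa [ang0, hu0, hn0] using hn
      filter_upwards [hne, hang, ih (c b - a) (c b) _ _ hsub hb hc' (ε / 2) (half_pos hε)]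
        with n h1 h2 h3
      rw [turnFrom, if_neg h, turnFrom, if_neg (sub_ne_zero.1 h1)]
      linarith

lemma turnL_lsc {α : Type*} (l : List α) (c : α → E)
    (cn : ℕ → α → E)
    (hc : ∀ t ∈ l, Tendsto (fun n => cn n t) atTop (nhds (c t))) (ε : ℝ) (hε : 0 < ε) :
    ∀ᶠ n in atTop, turnL (l.map c) - ε ≤ turnL (l.map (cn n)) := by
  cases l with
  | nil => exact Eventually.of_forall fun n => by simp [turnL, hε.le]
  | cons b l =>
    exact turnFrom_lsc l 0 (c b) c (fun _ => 0) (fun n => cn n b) cn tendsto_const_nhds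
      (hc b List.mem_cons_self) (fun t ht => hc t (List.mem_cons_of_mem _ ht)) ε hε

end Fary
section Fary2
variable {E : Type*} [NormedAddCommGroup E] [InnerProductSpace ℝ E]

/-- dyadic parameters -/
noncomputable def dy (n : ℕ) (j : ℕ) : ℝ := (j : ℝ) / 2 ^ n

/-- turning of the dyadic polygon -/
noncomputable def dyTC (c : ℝ → E) (n : ℕ) : ℝ :=
  turnL ((List.range (2 ^ n + 1)).map fun j => c (dy n j))

lemma sublist_range {l : List ℕ} {N : ℕ} (h : l.Pairwise (· < ·)) (hN : ∀ x ∈ l, x < N) :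
    l.Sublist (List.range N) := by
  refine List.sublist_of_subperm_of_pairwise (r := (· ≤ ·)) ?_ (h.imp le_of_lt) ?_
  · exact List.subperm_of_subset (h.imp ne_of_lt) (fun x hx => List.mem_range.2 (hN x hx))
  · exact List.pairwise_lt_range.imp le_of_lt

lemma pairwise_map_range (v : ℕ → ℕ) (m : ℕ) (h : ∀ i < m, v i < v (i + 1)) :
    ((List.range (m + 1)).map v).Pairwise (· < ·) := by
  rw [← List.isChain_iff_pairwise, List.isChain_map]
  exact (List.isChain_range_succ _ m).2 h

lemma dyTC_mono (c : ℝ → E) : Monotone (dyTC c) := by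
  refine monotone_nat_of_le_succ fun n => ?_
  unfold dyTC
  have h1 : ((List.range (2 ^ n + 1)).map fun j => c (dy n j)) =
      (((List.range (2 ^ n + 1)).map fun j => 2 * j).map fun j => c (dy (n + 1) j)) := by
    rw [List.map_map]
    refine List.map_congr_left fun j _ => ?_
    simp only [Function.comp, dy]
    congr 1
    push_cast
    rw [pow_succ]
    field_simp
  rw [h1]
  refine turnL_sublist (List.Sublist.map _ (sublist_range ?_ ?_))
  · exact pairwise_map_range _ _ fun i _ => by omega
  · intro x hx
    simp only [List.mem_map, List.mem_range] at hx
    obtain ⟨a, ha, rfl⟩ := hx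
    rw [pow_succ]; omega

lemma dyTC_le (c : ℝ → E) (n : ℕ) : ENNReal.ofReal (dyTC c n) ≤ arcTC c 0 1 := by
  have h : InscribedIn 0 1 (2 ^ n) (dy n) := by
    refine ⟨fun i _ => ?_, fun i hi => ⟨?_, ?_⟩⟩
    · unfold dy; push_cast; gcongr; linarith
    · unfold dy; positivity
    · unfold dy; rw [div_le_one (by positivity)]; exact_mod_cast hi
  have h2 := polyTC_eq c (2 ^ n) (dy n)
  unfold arcTC
  refine le_iSup_of_le (2 ^ n) (le_iSup_of_le (dy n) (le_iSup_of_le h ?_))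
  rw [h2]; exact le_rfl

lemma floor_tendsto (t : ℝ) (ht : 0 ≤ t) :
    Tendsto (fun n : ℕ => dy n ⌊t * 2 ^ n⌋₊) atTop (nhds t) := by
  have h : Tendsto (fun n : ℕ => (2 : ℝ) ^ n) atTop atTop :=
    tendsto_pow_atTop_atTop_of_one_lt (by norm_num)
  exact (tendsto_nat_floor_mul_div_atTop ht).comp h

lemma arcTC_eq (c : ℝ → E) (hc : ContinuousOn c (Set.Icc 0 1)) :
    arcTC c 0 1 = ⨆ n, ENNReal.ofReal (dyTC c n) := by
  refine le_antisymm ?_ (iSup_le fun n => dyTC_le c n)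
  refine iSup_le fun m => iSup_le fun u => iSup_le fun hu => ?_
  rw [polyTC_eq]
  obtain ⟨hlt, hmem⟩ := hu
  refine ENNReal.le_of_forall_pos_le_add fun ε hε _ => ?_
  -- rounding
  have hfl : ∀ i ≤ m, ∀ n, dy n ⌊u i * 2 ^ n⌋₊ ∈ Set.Icc (0 : ℝ) 1 := by
    intro i hi n
    have hp : (0 : ℝ) < 2 ^ n := by positivity
    refine ⟨by unfold dy; positivity, ?_⟩
    unfold dy
    rw [div_le_one hp]
    refine (Nat.floor_le (mul_nonneg (hmem i hi).1 hp.le)).trans ?_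
    nlinarith [(hmem i hi).2]
  have hev := turnL_lsc (List.range (m + 1)) (fun i => c (u i))
    (fun n i => c (dy n ⌊u i * 2 ^ n⌋₊)) (by
      intro i hi
      have hi' : i ≤ m := by have := List.mem_range.1 hi; omega
      have h1 := (hc (u i) (hmem i hi')).tendsto
      refine h1.comp (tendsto_nhdsWithin_iff.2 ⟨floor_tendsto _ (hmem i hi').1, ?_⟩)
      exact Eventually.of_forall fun n => hfl i hi' n) ε (by exact_mod_cast hε)
  have hst : ∀ᶠ n : ℕ in atTop, ∀ i ∈ Finset.range m, ⌊u i * 2 ^ n⌋₊ < ⌊u (i + 1) * 2 ^ n⌋₊ := by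
    rw [Filter.eventually_all_finset]
    intro i hi
    have hi' := Finset.mem_range.1 hi
    have h : Tendsto (fun n : ℕ => (u (i + 1) - u i) * (2 : ℝ) ^ n) atTop atTop :=
      (tendsto_pow_atTop_atTop_of_one_lt (by norm_num)).const_mul_atTop (by linarith [hlt i hi'])
    filter_upwards [h.eventually_ge_atTop 1] with n hn
    have h0 : 0 ≤ u i * 2 ^ n := mul_nonneg (hmem i hi'.le).1 (by positivity)
    rw [← Nat.add_one_le_iff, ← Nat.floor_add_one h0]
    exact Nat.floor_le_floor (by linarith)
  obtain ⟨n, h1, h2⟩ := (hev.and hst).exists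
  have h3 : turnL ((List.range (m + 1)).map fun i => c (dy n ⌊u i * 2 ^ n⌋₊)) ≤ dyTC c n := by
    have : ((List.range (m + 1)).map fun i => c (dy n ⌊u i * 2 ^ n⌋₊)) =
      (((List.range (m + 1)).map fun i => ⌊u i * 2 ^ n⌋₊).map fun j => c (dy n j)) := by
      rw [List.map_map]; rfl
    rw [this]
    refine turnL_sublist (List.Sublist.map _ (sublist_range ?_ ?_))
    · exact pairwise_map_range _ _ fun i hi => h2 i (Finset.mem_range.2 hi)
    · intro x hx
      simp only [List.mem_map, List.mem_range] at hx
      obtain ⟨i, hi, rfl⟩ := hx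
      have := (hfl i (by omega) n).2
      unfold dy at this
      rw [div_le_one (by positivity)] at this
      have h5 : ⌊u i * 2 ^ n⌋₊ ≤ 2 ^ n := by exact_mod_cast this
      omega
  have h4 : turnL ((List.range (m + 1)).map fun i => c (u i)) ≤ dyTC c n + ε := by linarith
  calc ENNReal.ofReal _ ≤ ENNReal.ofReal (dyTC c n + ε) := ENNReal.ofReal_le_ofReal h4
    _ ≤ ENNReal.ofReal (dyTC c n) + ENNReal.ofReal ε := ENNReal.ofReal_add_le
    _ ≤ _ := by
      rw [ENNReal.ofReal_coe_nnreal]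
      gcongr
      exact le_iSup (fun n => ENNReal.ofReal (dyTC c n)) n

end Fary2
section Fary3
open InnerProductGeometry
open scoped Matrix

/-- The projected rotated vector. -/
noncomputable def projG {d k : ℕ} (hkd : k < d) (g : Matrix.orthogonalGroup (Fin d) ℝ)
    (v : EuclideanSpace ℝ (Fin d)) : EuclideanSpace ℝ (Fin k) :=
  (EuclideanSpace.equiv (Fin k) ℝ).symm fun i =>
          Matrix.mulVec (g : Matrix (Fin d) (Fin d) ℝ)
            ((EuclideanSpace.equiv (Fin d) ℝ) v) (Fin.castLE hkd.le i)

/-- The rotated vector. -/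
noncomputable def actG {d : ℕ} (g : Matrix.orthogonalGroup (Fin d) ℝ)
    (v : EuclideanSpace ℝ (Fin d)) : EuclideanSpace ℝ (Fin d) :=
  (EuclideanSpace.equiv (Fin d) ℝ).symm
          (Matrix.mulVec (g : Matrix (Fin d) (Fin d) ℝ)
            ((EuclideanSpace.equiv (Fin d) ℝ) v))

variable {d k : ℕ} (hkd : k < d)

lemma projG_apply (g : Matrix.orthogonalGroup (Fin d) ℝ) (v : EuclideanSpace ℝ (Fin d))
    (i : Fin k) : projG hkd g v i = ∑ j, (g : Matrix (Fin d) (Fin d) ℝ) (Fin.castLE hkd.le i) j * v j :=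
  rfl

lemma projG_add (g : Matrix.orthogonalGroup (Fin d) ℝ) (v w : EuclideanSpace ℝ (Fin d)) :
    projG hkd g (v + w) = projG hkd g v + projG hkd g w := by
  ext i; simp [projG_apply, mul_add, Finset.sum_add_distrib]

lemma projG_smul (g : Matrix.orthogonalGroup (Fin d) ℝ) (r : ℝ) (v : EuclideanSpace ℝ (Fin d)) :
    projG hkd g (r • v) = r • projG hkd g v := by
  ext i; simp [projG_apply, Finset.mul_sum, mul_left_comm]

lemma projG_zero (g : Matrix.orthogonalGroup (Fin d) ℝ) :
    projG hkd g 0 = 0 := by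
  ext i; simp [projG_apply]

lemma projG_sub (g : Matrix.orthogonalGroup (Fin d) ℝ) (v w : EuclideanSpace ℝ (Fin d)) :
    projG hkd g (v - w) = projG hkd g v - projG hkd g w := by
  ext i; simp [projG_apply, mul_sub, Finset.sum_sub_distrib]

lemma projG_continuous (g : Matrix.orthogonalGroup (Fin d) ℝ) :
    Continuous (projG hkd g) := by
  refine (EuclideanSpace.equiv (Fin k) ℝ).symm.continuous.comp (continuous_pi fun i => ?_)
  change Continuous fun v : EuclideanSpace ℝ (Fin d) =>
    ∑ j, (g : Matrix (Fin d) (Fin d) ℝ) (Fin.castLE hkd.le i) j * v j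
  fun_prop

lemma projG_mul (g h : Matrix.orthogonalGroup (Fin d) ℝ) (v : EuclideanSpace ℝ (Fin d)) :
    projG hkd (g * h) v = projG hkd g (actG h v) := by
  unfold projG actG
  rw [ContinuousLinearEquiv.apply_symm_apply, Matrix.mulVec_mulVec]
  rfl

lemma measurable_entry (i j : Fin d) :
    Measurable fun g : Matrix.orthogonalGroup (Fin d) ℝ => (g : Matrix (Fin d) (Fin d) ℝ) i j := by
  have h : Measurable fun g : Matrix (Fin d) (Fin d) ℝ => g i j :=
    (measurable_pi_apply j).comp (measurable_pi_apply (X := fun _ : Fin d => Fin d → ℝ) i)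
  exact h.comp measurable_subtype_coe

lemma measurable_of_entry {X : Type*} [MeasurableSpace X] (f : X → Matrix.orthogonalGroup (Fin d) ℝ)
    (h : ∀ i j, Measurable fun x => (f x : Matrix (Fin d) (Fin d) ℝ) i j) : Measurable f := by
  refine Measurable.subtype_mk (f := fun x => (f x : Matrix (Fin d) (Fin d) ℝ)) ?_
  exact measurable_pi_iff.2 fun i => measurable_pi_iff.2 fun j => h i j

lemma measurable_projG (v : EuclideanSpace ℝ (Fin d)) :
    Measurable fun g : Matrix.orthogonalGroup (Fin d) ℝ => projG hkd g v := by
  have : Measurable fun g : Matrix.orthogonalGroup (Fin d) ℝ => (fun i => projG hkd g v i) := by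
    refine measurable_pi_iff.2 fun i => ?_
    simp only [projG_apply]
    exact Finset.measurable_sum _ fun j _ => (measurable_entry _ j).mul_const _
  exact (WithLp.measurable_toLp 2 _).comp this

lemma measurable_mulG : Measurable fun p : Matrix.orthogonalGroup (Fin d) ℝ ×
    Matrix.orthogonalGroup (Fin d) ℝ => p.1 * p.2 := by
  refine measurable_of_entry _ fun i j => ?_
  simp only [Submonoid.coe_mul, Matrix.mul_apply]
  exact Finset.measurable_sum _ fun l _ => ((measurable_entry i l).comp measurable_fst).mul
    ((measurable_entry l j).comp measurable_snd)

lemma measurable_invG : Measurable fun g : Matrix.orthogonalGroup (Fin d) ℝ => g⁻¹ := by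
  refine measurable_of_entry _ fun i j => ?_
  exact measurable_entry j i

variable (μ : Measure (Matrix.orthogonalGroup (Fin d) ℝ)) [IsProbabilityMeasure μ]

lemma lint_left
    (hinv : ∀ g : Matrix.orthogonalGroup (Fin d) ℝ, μ.map (fun h => g * h) = μ)
    (g : Matrix.orthogonalGroup (Fin d) ℝ)
    (f : Matrix.orthogonalGroup (Fin d) ℝ → ℝ≥0∞) (hf : Measurable f) :
    ∫⁻ h, f (g * h) ∂μ = ∫⁻ h, f h ∂μ := by
  conv_rhs => rw [← hinv g]
  exact (lintegral_map (g := fun h => g * h) hf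
    (measurable_mulG.comp (measurable_const.prodMk measurable_id))).symm

lemma lint_inv
    (hinv : ∀ g : Matrix.orthogonalGroup (Fin d) ℝ, μ.map (fun h => g * h) = μ)
    (f : Matrix.orthogonalGroup (Fin d) ℝ → ℝ≥0∞) (hf : Measurable f) :
    ∫⁻ h, f h⁻¹ ∂μ = ∫⁻ h, f h ∂μ := by
  have h1 : ∫⁻ x, ∫⁻ y, f (x⁻¹ * y) ∂μ ∂μ = ∫⁻ h, f h ∂μ := by
    simp [lint_left μ hinv _ f hf]
  have h2 : ∫⁻ x, ∫⁻ y, f (x⁻¹ * y) ∂μ ∂μ = ∫⁻ y, ∫⁻ x, f (x⁻¹ * y) ∂μ ∂μ := by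
    refine lintegral_lintegral_swap (Measurable.aemeasurable ?_)
    exact hf.comp (measurable_mulG.comp
      ((measurable_invG.comp measurable_fst).prodMk measurable_snd))
  have h3 : ∀ y, ∫⁻ x, f (x⁻¹ * y) ∂μ = ∫⁻ x, f x⁻¹ ∂μ := by
    intro y
    rw [← lint_left μ hinv y (fun x => f (x⁻¹ * y)) (hf.comp (measurable_mulG.comp
      (measurable_invG.prodMk measurable_const)))]
    simp
  rw [← h1, h2]
  simp [h3]

lemma lint_right
    (hinv : ∀ g : Matrix.orthogonalGroup (Fin d) ℝ, μ.map (fun h => g * h) = μ)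
    (g : Matrix.orthogonalGroup (Fin d) ℝ)
    (f : Matrix.orthogonalGroup (Fin d) ℝ → ℝ≥0∞) (hf : Measurable f) :
    ∫⁻ h, f (h * g) ∂μ = ∫⁻ h, f h ∂μ := by
  rw [← lint_inv μ hinv (fun h => f (h * g)) (hf.comp (measurable_mulG.comp
      (measurable_id.prodMk measurable_const)))]
  rw [← lint_inv μ hinv f hf, ← lint_left μ hinv g⁻¹ (fun h => f h⁻¹) (hf.comp measurable_invG)]
  simp

lemma map_right
    (hinv : ∀ g : Matrix.orthogonalGroup (Fin d) ℝ, μ.map (fun h => g * h) = μ)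
    (g : Matrix.orthogonalGroup (Fin d) ℝ) : μ.map (fun h => h * g) = μ := by
  have hm : Measurable fun h : Matrix.orthogonalGroup (Fin d) ℝ => h * g :=
    measurable_mulG.comp (measurable_id.prodMk measurable_const)
  ext s hs
  have := lint_right μ hinv g (s.indicator 1) (measurable_one.indicator hs)
  rw [lintegral_indicator_one hs] at this
  rw [← this, Measure.map_apply hm hs, ← lintegral_indicator_one (hm hs)]
  rfl

lemma exists_actG (L : EuclideanSpace ℝ (Fin d) ≃ₗᵢ[ℝ] EuclideanSpace ℝ (Fin d)) :
    ∃ h : Matrix.orthogonalGroup (Fin d) ℝ, ∀ v, actG h v = L v := by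
  let b := EuclideanSpace.basisFun (Fin d) ℝ
  refine ⟨⟨_, b.toMatrix_orthonormalBasis_mem_orthogonal (b.map L)⟩, fun v => ?_⟩
  have hv : v = ∑ j, v j • b j := by
    simpa [b] using ((EuclideanSpace.basisFun (Fin d) ℝ).sum_repr v).symm
  ext i
  conv_rhs => rw [hv]
  simp [actG, Matrix.mulVec, dotProduct, Module.Basis.toMatrix_apply, b, mul_comm]

/-- vanishing set of the `i`-th coordinate -/
def vanSet (i : Fin k) (v : EuclideanSpace ℝ (Fin d)) : Set (Matrix.orthogonalGroup (Fin d) ℝ) :=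
  {g | projG hkd g v i = 0}

lemma measurableSet_vanSet (i : Fin k) (v : EuclideanSpace ℝ (Fin d)) :
    MeasurableSet (vanSet hkd i v) := by
  have h : Measurable fun g : Matrix.orthogonalGroup (Fin d) ℝ => projG hkd g v i := by
    simp only [projG_apply]
    exact Finset.measurable_sum _ fun j _ => (measurable_entry _ j).mul_const _
  exact h (measurableSet_singleton 0)

lemma vanSet_smul (i : Fin k) (v : EuclideanSpace ℝ (Fin d)) (r : ℝ) (hr : r ≠ 0) :
    vanSet hkd i (r • v) = vanSet hkd i v := by
  ext g; simp [vanSet, projG_smul, hr]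

lemma vanSet_const
    (hinv : ∀ g : Matrix.orthogonalGroup (Fin d) ℝ, μ.map (fun h => g * h) = μ)
    (i : Fin k) (v w : EuclideanSpace ℝ (Fin d)) (hv : v ≠ 0) (hw : w ≠ 0) :
    μ (vanSet hkd i v) = μ (vanSet hkd i w) := by
  have hn : ‖‖w‖ • v‖ = ‖‖v‖ • w‖ := by simp [norm_smul, mul_comm]
  obtain ⟨h, hh⟩ := exists_actG (Submodule.reflection (ℝ ∙ (‖w‖ • v - ‖v‖ • w))ᗮ)
  have h1 : actG h (‖w‖ • v) = ‖v‖ • w := by rw [hh]; exact Submodule.reflection_sub hn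
  rw [← vanSet_smul hkd i v _ (norm_ne_zero_iff.2 hw), ← vanSet_smul hkd i w _ (norm_ne_zero_iff.2 hv),
    ← h1]
  have hm : Measurable fun g : Matrix.orthogonalGroup (Fin d) ℝ => g * h :=
    measurable_mulG.comp (measurable_id.prodMk measurable_const)
  conv_lhs => rw [← map_right μ hinv h]
  rw [Measure.map_apply hm (measurableSet_vanSet hkd i _)]
  congr 1
  ext g
  simp [vanSet, projG_mul]

/-- moment curve -/
noncomputable def momentV (d : ℕ) (t : ℕ) : EuclideanSpace ℝ (Fin d) :=
  WithLp.toLp 2 fun j => (t : ℝ) ^ (j : ℕ)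

lemma row_ne_zero (g : Matrix.orthogonalGroup (Fin d) ℝ) (i : Fin d) :
    ∃ j, (g : Matrix (Fin d) (Fin d) ℝ) i j ≠ 0 := by
  by_contra! h
  have h1 := (Matrix.mem_orthogonalGroup_iff (Fin d) ℝ).1 g.2
  have h2 := congrFun (congrFun h1 i) i
  simp [Matrix.mul_apply, h] at h2

open Classical in
lemma card_vanish (i : Fin k) (g : Matrix.orthogonalGroup (Fin d) ℝ) (N : ℕ) :
    ((Finset.range N).filter fun t => g ∈ vanSet hkd i (momentV d t)).card ≤ d := by
  by_contra! hlt
  set s := (Finset.range N).filter fun t => g ∈ vanSet hkd i (momentV d t) with hs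
  let P : Polynomial ℝ := ∑ j : Fin d, Polynomial.C ((g : Matrix (Fin d) (Fin d) ℝ)
    (Fin.castLE hkd.le i) j) * Polynomial.X ^ (j : ℕ)
  have hdeg : P.natDegree ≤ d :=
    Polynomial.natDegree_sum_le_of_forall_le _ _ fun j _ =>
      (Polynomial.natDegree_C_mul_X_pow_le _ _).trans j.2.le
  have hP : P = 0 := by
    refine Polynomial.eq_zero_of_natDegree_lt_card_of_eval_eq_zero' P
      (s.image fun t : ℕ => (t : ℝ)) ?_ ?_
    · intro x hx
      obtain ⟨t, ht, rfl⟩ := Finset.mem_image.1 hx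
      have h := (Finset.mem_filter.1 ht).2
      simp only [vanSet, Set.mem_setOf_eq, projG_apply, momentV] at h
      simpa [P, Polynomial.eval_finset_sum] using h
    · rw [Finset.card_image_of_injective _ Nat.cast_injective]; omega
  obtain ⟨j, hj⟩ := row_ne_zero g (Fin.castLE hkd.le i)
  apply hj
  have h := congrArg (fun p => Polynomial.coeff p (j : ℕ)) hP
  simpa [P, Polynomial.finset_sum_coeff, Polynomial.coeff_C_mul, Polynomial.coeff_X_pow,
    Fin.val_inj, Finset.sum_ite_eq] using h

lemma vanSet_null
    (hinv : ∀ g : Matrix.orthogonalGroup (Fin d) ℝ, μ.map (fun h => g * h) = μ)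
    (i : Fin k) (v : EuclideanSpace ℝ (Fin d)) (hv : v ≠ 0) :
    μ (vanSet hkd i v) = 0 := by
  classical
  have hm : ∀ t, momentV d t ≠ 0 := by
    intro t h
    have := congrArg (fun x : EuclideanSpace ℝ (Fin d) => x ⟨0, by omega⟩) h
    simp [momentV] at this
  have key : ∀ N : ℕ, (N : ℝ≥0∞) * μ (vanSet hkd i v) ≤ d := by
    intro N
    have h1 : (N : ℝ≥0∞) * μ (vanSet hkd i v) =
        ∑ t ∈ Finset.range N, μ (vanSet hkd i (momentV d t)) := by
      rw [Finset.sum_congr rfl fun t _ => vanSet_const hkd μ hinv i (momentV d t) v (hm t) hv]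
      simp
    have h2 : ∑ t ∈ Finset.range N, μ (vanSet hkd i (momentV d t)) =
        ∫⁻ g, ∑ t ∈ Finset.range N, (vanSet hkd i (momentV d t)).indicator 1 g ∂μ := by
      rw [lintegral_finset_sum _ fun t _ =>
        measurable_one.indicator (measurableSet_vanSet hkd i _)]
      exact Finset.sum_congr rfl fun t _ =>
        (lintegral_indicator_one (measurableSet_vanSet hkd i _)).symm
    rw [h1, h2]
    calc _ ≤ ∫⁻ _, (d : ℝ≥0∞) ∂μ := by
          refine lintegral_mono fun g => ?_
          have := card_vanish hkd i g N
          simp only [Set.indicator_apply, Pi.one_apply, Finset.sum_boole]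
          exact_mod_cast this
      _ = d := by simp
  by_contra h0
  obtain ⟨N, hN⟩ := ENNReal.exists_nat_mul_gt h0 (ENNReal.natCast_ne_top d)
  exact absurd (key N) (not_le.2 hN)

lemma ae_ne
    (hinv : ∀ g : Matrix.orthogonalGroup (Fin d) ℝ, μ.map (fun h => g * h) = μ)
    (hk : 1 ≤ k) (v : EuclideanSpace ℝ (Fin d)) (hv : v ≠ 0) :
    ∀ᵐ g ∂μ, projG hkd g v ≠ 0 := by
  have h := vanSet_null hkd μ hinv ⟨0, hk⟩ v hv
  filter_upwards [measure_eq_zero_iff_ae_notMem.1 h] with g hg h0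
  apply hg
  simp [vanSet, h0]

end Fary3
section Fary4
open InnerProductGeometry

lemma additive_eq_id (φ : ℝ → ℝ) (h0 : ∀ x, 0 ≤ φ x)
    (hadd : ∀ a b, 0 ≤ a → 0 ≤ b → a + b ≤ Real.pi → φ (a + b) = φ a + φ b)
    (hpi : φ Real.pi = Real.pi) (θ : ℝ) (h1 : 0 ≤ θ) (h2 : θ ≤ Real.pi) : φ θ = θ := by
  have pp := Real.pi_pos
  have hz : φ 0 = 0 := by
    have := hadd 0 0 le_rfl le_rfl (by linarith)
    simp at this; exact this
  have hlow : ∀ θ, 0 ≤ θ → θ ≤ Real.pi → θ ≤ φ θ := by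
    intro θ h1 h2
    have hmul : ∀ (x : ℝ), 0 ≤ x → ∀ j : ℕ, j * x ≤ Real.pi → φ (j * x) = j * φ x := by
      intro x hx j
      induction j with
      | zero => intro _; simp [hz]
      | succ j ih =>
        intro hj
        push_cast at hj ⊢
        rw [add_mul, one_mul] at hj
        rw [add_mul, one_mul, hadd _ _ (by positivity) hx hj, ih (by linarith)]
        ring
    refine le_of_forall_pos_le_add fun ε hε => ?_
    obtain ⟨n, hn⟩ := exists_nat_gt (Real.pi / ε)
    have hn0 : (0 : ℝ) < n := lt_trans (by positivity) hn
    have hx : φ (Real.pi / n) = Real.pi / n := by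
      have := hmul (Real.pi / n) (by positivity) n (by field_simp; exact le_rfl)
      rw [mul_div_cancel₀ _ hn0.ne', hpi] at this
      field_simp; linarith
    have hxe : Real.pi / n < ε := by
      rw [div_lt_iff₀ hε] at hn
      rw [div_lt_iff₀ hn0]; linarith
    set x := Real.pi / n with hxdef
    have hx0 : 0 < x := by positivity
    set j := ⌊θ / x⌋₊
    have hj1 : (j : ℝ) * x ≤ θ := by
      have := Nat.floor_le (div_nonneg h1 hx0.le)
      rwa [le_div_iff₀ hx0] at this
    have hj2 : θ < (j + 1) * x := by
      have := Nat.lt_floor_add_one (θ / x)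
      rwa [div_lt_iff₀ hx0] at this
    have h3 := hadd (j * x) (θ - j * x) (by positivity) (by linarith) (by linarith)
    rw [hmul x hx0.le j (by linarith), hx, add_sub_cancel] at h3
    have := h0 (θ - j * x)
    linarith
  have h3 := hadd θ (Real.pi - θ) h1 (by linarith) (by linarith)
  rw [add_sub_cancel, hpi] at h3
  have h4 := hlow θ h1 h2
  have h5 := hlow (Real.pi - θ) (by linarith) (by linarith)
  linarith

/-- point of the unit circle -/
noncomputable def circ {E : Type*} [NormedAddCommGroup E] [InnerProductSpace ℝ E]
    (e f : E) (θ : ℝ) : E := Real.cos θ • e + Real.sin θ • f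

variable {d k : ℕ} (hkd : k < d)

lemma circ_inner (e f : EuclideanSpace ℝ (Fin d)) (he : ‖e‖ = 1) (hf : ‖f‖ = 1)
    (hef : inner ℝ e f = 0) (a b : ℝ) :
    inner ℝ (circ e f a) (circ e f b) = Real.cos (a - b) := by
  have hfe : inner ℝ f e = 0 := by rw [real_inner_comm]; exact hef
  simp only [circ, inner_add_left, inner_add_right, real_inner_smul_left, real_inner_smul_right,
    hef, hfe, real_inner_self_eq_norm_sq, he, hf, Real.cos_sub]
  ring

lemma circ_norm (e f : EuclideanSpace ℝ (Fin d)) (he : ‖e‖ = 1) (hf : ‖f‖ = 1)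
    (hef : inner ℝ e f = 0) (a : ℝ) : ‖circ e f a‖ = 1 := by
  have h := circ_inner e f he hf hef a a
  rw [real_inner_self_eq_norm_sq, sub_self, Real.cos_zero] at h
  nlinarith [norm_nonneg (circ e f a)]

lemma exists_onb (i0 i1 : Fin d) (h01 : i0 ≠ i1) (e f : EuclideanSpace ℝ (Fin d))
    (he : ‖e‖ = 1) (hf : ‖f‖ = 1) (hef : inner ℝ e f = 0) :
    ∃ b : OrthonormalBasis (Fin d) ℝ (EuclideanSpace ℝ (Fin d)), b i0 = e ∧ b i1 = f := by
  have hfe : inner ℝ f e = 0 := by rw [real_inner_comm]; exact hef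
  have hO : Orthonormal ℝ (Set.domRestrict ({i0, i1} : Set (Fin d))
      (fun i => if i = i0 then e else f)) := by
    constructor
    · rintro ⟨i, hi⟩
      simp only [Set.domRestrict_apply]; split_ifs <;> assumption
    · rintro ⟨i, hi⟩ ⟨j, hj⟩ hij
      have hij' : i ≠ j := fun h => hij (Subtype.ext h)
      simp only [Set.domRestrict_apply]
      rcases hi with rfl | rfl <;> rcases hj with rfl | rfl
      · exact absurd rfl hij'
      · simpa [h01.symm] using hef
      · simpa [h01.symm] using hfe
      · exact absurd rfl hij'
  obtain ⟨b, hb⟩ := hO.exists_orthonormalBasis_extension_of_card_eq (by simp)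
  refine ⟨b, ?_, ?_⟩
  · simpa using hb i0 (by simp)
  · simpa [h01.symm] using hb i1 (by simp)

lemma exists_rot (hd : 2 ≤ d) (e f : EuclideanSpace ℝ (Fin d))
    (he : ‖e‖ = 1) (hf : ‖f‖ = 1) (hef : inner ℝ e f = 0) (a : ℝ) :
    ∃ h : Matrix.orthogonalGroup (Fin d) ℝ, ∀ b, actG h (circ e f b) = circ e f (a + b) := by
  have h01 : (⟨0, by omega⟩ : Fin d) ≠ ⟨1, by omega⟩ := by simp
  obtain ⟨b1, h1, h2⟩ := exists_onb _ _ h01 e f he hf hef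
  obtain ⟨b2, h3, h4⟩ := exists_onb _ _ h01 (circ e f a) (circ e f (a + Real.pi / 2))
    (circ_norm e f he hf hef _) (circ_norm e f he hf hef _) (by
      rw [circ_inner e f he hf hef]; simp)
  obtain ⟨h, hh⟩ := exists_actG (b1.equiv b2 (Equiv.refl _))
  refine ⟨h, fun b => ?_⟩
  rw [hh]
  have e1 : (b1.equiv b2 (Equiv.refl _)) e = circ e f a := by
    rw [← h3, ← h1]; simp
  have e2 : (b1.equiv b2 (Equiv.refl _)) f = circ e f (a + Real.pi / 2) := by
    rw [← h4, ← h2]; simp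
  rw [circ, map_add, map_smul, map_smul, e1, e2]
  simp only [circ, Real.cos_add, Real.sin_add, Real.cos_pi_div_two, Real.sin_pi_div_two]
  module

lemma measurable_angle' {X : Type*} [MeasurableSpace X] (f g : X → EuclideanSpace ℝ (Fin k))
    (hf : Measurable f) (hg : Measurable g) : Measurable fun x => angle (f x) (g x) := by
  unfold angle
  exact Real.measurable_arccos.comp ((hf.inner hg).div (hf.norm.mul hg.norm))

variable (μ : Measure (Matrix.orthogonalGroup (Fin d) ℝ)) [IsProbabilityMeasure μ]

lemma integrable_angle (v w : EuclideanSpace ℝ (Fin d)) :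
    Integrable (fun g => angle (projG hkd g v) (projG hkd g w)) μ := by
  refine Integrable.of_bound (C := Real.pi) (measurable_angle' _ _ (measurable_projG hkd v)
    (measurable_projG hkd w)).aestronglyMeasurable (Eventually.of_forall fun g => ?_)
  rw [Real.norm_eq_abs, abs_of_nonneg (angle_nonneg _ _)]
  exact angle_le_pi _ _

/-- averaged angle -/
noncomputable def avgAngle (v w : EuclideanSpace ℝ (Fin d)) : ℝ :=
  ∫ g, angle (projG hkd g v) (projG hkd g w) ∂μ

lemma avgAngle_act
    (hinv : ∀ g : Matrix.orthogonalGroup (Fin d) ℝ, μ.map (fun h => g * h) = μ)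
    (h : Matrix.orthogonalGroup (Fin d) ℝ) (v w : EuclideanSpace ℝ (Fin d)) :
    avgAngle hkd μ (actG h v) (actG h w) = avgAngle hkd μ v w := by
  have hm : Measurable fun g : Matrix.orthogonalGroup (Fin d) ℝ => g * h :=
    measurable_mulG.comp (measurable_id.prodMk measurable_const)
  unfold avgAngle
  conv_rhs => rw [← map_right μ hinv h]
  rw [integral_map hm.aemeasurable (measurable_angle' _ _ (measurable_projG hkd v)
    (measurable_projG hkd w)).aestronglyMeasurable]
  simp only [projG_mul]

lemma projG_circ (g : Matrix.orthogonalGroup (Fin d) ℝ) (e f : EuclideanSpace ℝ (Fin d)) (a : ℝ) :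
    projG hkd g (circ e f a) = circ (projG hkd g e) (projG hkd g f) a := by
  simp only [circ, projG_add, projG_smul]

lemma circ_angle_add {E : Type*} [NormedAddCommGroup E] [InnerProductSpace ℝ E] (e f : E)
    (a b : ℝ) (ha : 0 ≤ a) (hb : 0 ≤ b) (hab : a + b ≤ Real.pi) (h0 : circ e f 0 ≠ 0)
    (h1 : circ e f a ≠ 0) :
    angle (circ e f 0) (circ e f (a + b)) =
      angle (circ e f 0) (circ e f a) + angle (circ e f a) (circ e f (a + b)) := by
  rcases hab.eq_or_lt with h | h
  · have h2 : circ e f (a + b) = - circ e f 0 := by rw [h]; simp [circ]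
    rw [h2, angle_neg_right, angle_neg_right, angle_self h0, angle_comm (circ e f a)]; ring
  · rcases (add_nonneg ha hb).eq_or_lt with h' | h'
    · have ha0 : a = 0 := by linarith
      have hb0 : b = 0 := by linarith
      subst ha0 hb0
      simp [angle_self h0]
    · have hs : 0 < Real.sin (a + b) := Real.sin_pos_of_pos_of_lt_pi h' h
      refine angle_eq_angle_add_add_angle_add_of_mem_span h1 (Submodule.mem_span_pair.2
        ⟨⟨Real.sin b / Real.sin (a + b), div_nonneg
          (Real.sin_nonneg_of_nonneg_of_le_pi hb (by linarith)) hs.le⟩,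
         ⟨Real.sin a / Real.sin (a + b), div_nonneg
          (Real.sin_nonneg_of_nonneg_of_le_pi ha (by linarith)) hs.le⟩, ?_⟩)
      change (Real.sin b / Real.sin (a + b)) • circ e f 0 +
        (Real.sin a / Real.sin (a + b)) • circ e f (a + b) = circ e f a
      have c1 : Real.sin b / Real.sin (a + b) + Real.sin a / Real.sin (a + b) * Real.cos (a + b)
          = Real.cos a := by
        field_simp
        rw [Real.sin_add, Real.cos_add]
        linear_combination (-Real.sin b) * Real.sin_sq_add_cos_sq a
      have c2 : Real.sin a / Real.sin (a + b) * Real.sin (a + b) = Real.sin a := by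
        field_simp
      have c3 : (Real.sin b / Real.sin (a + b)) • circ e f 0 +
          (Real.sin a / Real.sin (a + b)) • circ e f (a + b) =
          (Real.sin b / Real.sin (a + b) + Real.sin a / Real.sin (a + b) * Real.cos (a + b)) • e +
          (Real.sin a / Real.sin (a + b) * Real.sin (a + b)) • f := by
        simp only [circ, Real.cos_zero, Real.sin_zero]
        module
      rw [c3, c1, c2, circ]

lemma avgAngle_circ (hk : 1 ≤ k)
    (hinv : ∀ g : Matrix.orthogonalGroup (Fin d) ℝ, μ.map (fun h => g * h) = μ)
    (e f : EuclideanSpace ℝ (Fin d))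
    (he : ‖e‖ = 1) (hf : ‖f‖ = 1) (hef : inner ℝ e f = 0) (θ : ℝ) (h1 : 0 ≤ θ)
    (h2 : θ ≤ Real.pi) : avgAngle hkd μ (circ e f 0) (circ e f θ) = θ := by
  have hne : ∀ a, circ e f a ≠ 0 := fun a h => by
    have := circ_norm e f he hf hef a
    rw [h] at this; simp at this
  refine additive_eq_id (fun θ => avgAngle hkd μ (circ e f 0) (circ e f θ)) ?_ ?_ ?_ θ h1 h2
  · exact fun x => integral_nonneg fun g => angle_nonneg _ _
  · intro a b ha hb hab
    obtain ⟨h, hh⟩ := exists_rot (by omega) e f he hf hef a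
    have h3 := avgAngle_act hkd μ hinv h (circ e f 0) (circ e f b)
    rw [hh, hh, add_zero] at h3
    rw [← h3]
    unfold avgAngle
    rw [← integral_add (integrable_angle hkd μ _ _) (integrable_angle hkd μ _ _)]
    refine integral_congr_ae ?_
    filter_upwards [ae_ne hkd μ hinv hk _ (hne 0), ae_ne hkd μ hinv hk _ (hne a)] with g g0 ga
    rw [projG_circ] at g0 ga
    simp only [projG_circ]
    exact circ_angle_add _ _ a b ha hb hab g0 ga
  · have : avgAngle hkd μ (circ e f 0) (circ e f Real.pi) = ∫ _, Real.pi ∂μ := by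
      refine integral_congr_ae ?_
      filter_upwards [ae_ne hkd μ hinv hk _ (hne 0)] with g g0
      have h3 : circ e f Real.pi = (-1 : ℝ) • circ e f 0 := by simp [circ]
      rw [h3, projG_smul, neg_smul, one_smul, angle_self_neg_of_nonzero g0]
    simp [this]

lemma exists_circ (hd : 2 ≤ d) (v w : EuclideanSpace ℝ (Fin d)) (hv : v ≠ 0) (hw : w ≠ 0) :
    ∃ e f : EuclideanSpace ℝ (Fin d), ‖e‖ = 1 ∧ ‖f‖ = 1 ∧ inner ℝ e f = 0 ∧
      v = ‖v‖ • circ e f 0 ∧ w = ‖w‖ • circ e f (angle v w) := by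
  have hv' := norm_ne_zero_iff.2 hv
  have hw' := norm_ne_zero_iff.2 hw
  set θ := angle v w with hθ
  set e := ‖v‖⁻¹ • v with he
  have he1 : ‖e‖ = 1 := by simp [he, norm_smul, hv']
  set x := ‖w‖⁻¹ • w - Real.cos θ • e with hx
  have hew : inner ℝ e (‖w‖⁻¹ • w) = Real.cos θ := by
    rw [hθ, cos_angle, he, real_inner_smul_left, real_inner_smul_right]; field_simp
  have hex : inner ℝ e x = 0 := by
    rw [hx, inner_sub_right, hew, real_inner_smul_right, real_inner_self_eq_norm_sq, he1]; ring
  have hxn : ‖x‖ ^ 2 = Real.sin θ ^ 2 := by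
    have hwn : ‖‖w‖⁻¹ • w‖ = 1 := by simp [norm_smul, hw']
    rw [hx, norm_sub_sq_real, real_inner_smul_right, real_inner_comm, hew, hwn, norm_smul, he1,
      Real.norm_eq_abs, mul_one, sq_abs]
    linear_combination -(Real.sin_sq_add_cos_sq θ)
  have hvE : v = ‖v‖ • e := by simp [he, smul_smul, hv']
  have hwE : w = ‖w‖ • (Real.cos θ • e + x) := by simp [hx, smul_smul, hw']
  have hs0 : 0 ≤ Real.sin θ := sin_angle_nonneg _ _
  have hxn' : ‖x‖ = Real.sin θ := by
    rw [← abs_of_nonneg hs0, ← abs_of_nonneg (norm_nonneg x)]; exact (sq_eq_sq_iff_abs_eq_abs _ _).1 hxn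
  by_cases hs : Real.sin θ = 0
  · have hx0 : x = 0 := by rw [← norm_eq_zero, hxn', hs]
    have hbot : (ℝ ∙ e)ᗮ ≠ ⊥ := by
      intro hb
      have h1 := Submodule.finrank_add_finrank_orthogonal (ℝ ∙ e)
      rw [hb, finrank_bot, finrank_euclideanSpace, Fintype.card_fin] at h1
      have he0 : e ≠ 0 := fun h => by rw [h] at he1; simp at he1
      have h2 := finrank_span_singleton (K := ℝ) he0
      omega
    obtain ⟨y, hy, hy0⟩ := Submodule.exists_mem_ne_zero_of_ne_bot hbot
    have hy' := norm_ne_zero_iff.2 hy0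
    refine ⟨e, ‖y‖⁻¹ • y, he1, by simp [norm_smul, hy'], ?_, ?_, ?_⟩
    · rw [real_inner_smul_right, Submodule.mem_orthogonal_singleton_iff_inner_right.1 hy, mul_zero]
    · simpa [circ] using hvE
    · rw [hx0] at hwE
      simpa [circ, hs] using hwE
  · refine ⟨e, (Real.sin θ)⁻¹ • x, he1, ?_, ?_, ?_, ?_⟩
    · rw [norm_smul, hxn', norm_inv, Real.norm_eq_abs, abs_of_nonneg hs0, inv_mul_cancel₀ hs]
    · rw [real_inner_smul_right, hex, mul_zero]
    · simpa [circ] using hvE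
    · rw [circ, smul_smul (Real.sin θ), mul_inv_cancel₀ hs, one_smul]; exact hwE

lemma lint_angle (hk : 1 ≤ k)
    (hinv : ∀ g : Matrix.orthogonalGroup (Fin d) ℝ, μ.map (fun h => g * h) = μ)
    (v w : EuclideanSpace ℝ (Fin d)) (hv : v ≠ 0) (hw : w ≠ 0) :
    ∫⁻ g, ENNReal.ofReal (angle (projG hkd g v) (projG hkd g w)) ∂μ =
      ENNReal.ofReal (angle v w) := by
  rw [← ofReal_integral_eq_lintegral_ofReal (integrable_angle hkd μ v w)
    (Eventually.of_forall fun g => angle_nonneg _ _)]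
  congr 1
  obtain ⟨e, f, he, hf, hef, h1, h2⟩ := exists_circ (by omega) v w hv hw
  have h3 := avgAngle_circ hkd μ hk hinv e f he hf hef (angle v w) (angle_nonneg _ _)
    (angle_le_pi _ _)
  conv_rhs => rw [← h3]
  unfold avgAngle
  refine integral_congr_ae (Eventually.of_forall fun g => ?_)
  have e1 : projG hkd g v = ‖v‖ • projG hkd g (circ e f 0) := by
    rw [← projG_smul, ← h1]
  have e2 : projG hkd g w = ‖w‖ • projG hkd g (circ e f (angle v w)) := by
    rw [← projG_smul, ← h2]
  simp only
  rw [e1, e2, angle_smul_left_of_pos _ _ (norm_pos_iff.2 hv),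
    angle_smul_right_of_pos _ _ (norm_pos_iff.2 hw)]

lemma measurable_ang0 {X : Type*} [MeasurableSpace X] (f g : X → EuclideanSpace ℝ (Fin k))
    (hf : Measurable f) (hg : Measurable g) : Measurable fun x => ang0 (f x) (g x) := by
  unfold ang0
  exact Measurable.ite (hf (measurableSet_singleton 0)) measurable_const (measurable_angle' f g hf hg)

lemma measurable_turnFrom {X α : Type*} [MeasurableSpace X] (l : List α)
    (c : X → α → EuclideanSpace ℝ (Fin k)) (hc : ∀ t, Measurable fun x => c x t)
    (u a : X → EuclideanSpace ℝ (Fin k)) (hu : Measurable u) (ha : Measurable a) :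
    Measurable fun x => turnFrom (u x) (a x) (l.map (c x)) := by
  induction l generalizing u a with
  | nil => simp [turnFrom]
  | cons b l ih =>
    simp only [List.map_cons, turnFrom]
    exact Measurable.ite (measurableSet_eq_fun (hc b) ha) (ih u a hu ha)
      ((measurable_ang0 _ _ hu ((hc b).sub ha)).add (ih _ _ ((hc b).sub ha) (hc b)))

lemma lint_turnFrom (hk : 1 ≤ k)
    (hinv : ∀ g : Matrix.orthogonalGroup (Fin d) ℝ, μ.map (fun h => g * h) = μ)
    (l : List (EuclideanSpace ℝ (Fin d))) (u a : EuclideanSpace ℝ (Fin d)) :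
    ∫⁻ g, ENNReal.ofReal (turnFrom (projG hkd g u) (projG hkd g a) (l.map (projG hkd g))) ∂μ =
      ENNReal.ofReal (turnFrom u a l) := by
  induction l generalizing u a with
  | nil => simp [turnFrom]
  | cons b l ih =>
    simp only [List.map_cons]
    by_cases h : b = a
    · subst h
      simp only [turnFrom, if_true]
      exact ih u b
    · have h0 : b - a ≠ 0 := sub_ne_zero.2 h
      have hA : ∫⁻ g, ENNReal.ofReal (ang0 (projG hkd g u) (projG hkd g (b - a))) ∂μ =
          ENNReal.ofReal (ang0 u (b - a)) := by
        by_cases hu : u = 0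
        · simp [hu, projG_zero, ang0]
        · rw [ang0, if_neg hu, ← lint_angle hkd μ hk hinv u (b - a) hu h0]
          refine lintegral_congr_ae ?_
          filter_upwards [ae_ne hkd μ hinv hk u hu] with g hg
          simp only [ang0, if_neg hg]
      rw [turnFrom, if_neg h, ENNReal.ofReal_add (ang0_nonneg _ _) (turnFrom_nonneg _ _ _),
        ← hA, ← ih, ← lintegral_add_left (measurable_ang0 _ _ (measurable_projG hkd u)
          (measurable_projG hkd _)).ennreal_ofReal]
      refine lintegral_congr_ae ?_
      filter_upwards [ae_ne hkd μ hinv hk _ h0] with g hg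
      have hg' : projG hkd g b ≠ projG hkd g a := by
        rw [projG_sub] at hg; exact sub_ne_zero.1 hg
      rw [turnFrom, if_neg hg', ENNReal.ofReal_add (ang0_nonneg _ _) (turnFrom_nonneg _ _ _),
        projG_sub]

lemma lint_turnL (hk : 1 ≤ k)
    (hinv : ∀ g : Matrix.orthogonalGroup (Fin d) ℝ, μ.map (fun h => g * h) = μ)
    (l : List (EuclideanSpace ℝ (Fin d))) :
    ∫⁻ g, ENNReal.ofReal (turnL (l.map (projG hkd g))) ∂μ = ENNReal.ofReal (turnL l) := by
  cases l with
  | nil => simp [turnL]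
  | cons a l =>
    have := lint_turnFrom hkd μ hk hinv l 0 a
    simp only [projG_zero] at this
    exact this

lemma measurable_turnL (l : List (EuclideanSpace ℝ (Fin d))) :
    Measurable fun g : Matrix.orthogonalGroup (Fin d) ℝ => turnL (l.map (projG hkd g)) := by
  cases l with
  | nil => simp [turnL]
  | cons a l =>
    exact measurable_turnFrom l (fun g v => projG hkd g v) (measurable_projG hkd) (fun _ => 0) _
      measurable_const (measurable_projG hkd a)

end Fary4
/-- Fáry's averaged-projection formula: for a continuous curve
`γ : [0,1] → ℝᵈ` and `1 ≤ k < d`, the total curvature of `γ` equals the average, over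
the Haar probability measure on the orthogonal group `O(d)` (characterized as a
left-invariant probability measure), of the total curvature of the orthogonal
projections of the rotated curves to the first `k` coordinates. -/
theorem fary_average_projection (d k : ℕ) (hk : 1 ≤ k) (hkd : k < d)
    (γ : ℝ → EuclideanSpace ℝ (Fin d)) (hγ : ContinuousOn γ (Set.Icc 0 1))
    (μ : MeasureTheory.Measure (Matrix.orthogonalGroup (Fin d) ℝ))
    [MeasureTheory.IsProbabilityMeasure μ]
    (hinv : ∀ g : Matrix.orthogonalGroup (Fin d) ℝ, μ.map (fun h => g * h) = μ) :
    arcTC γ 0 1 =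
      ∫⁻ g, arcTC (fun t => (EuclideanSpace.equiv (Fin k) ℝ).symm fun i =>
          Matrix.mulVec (g : Matrix (Fin d) (Fin d) ℝ)
            ((EuclideanSpace.equiv (Fin d) ℝ) (γ t)) (Fin.castLE hkd.le i)) 0 1 ∂μ := by
  have hproj : ∀ g : Matrix.orthogonalGroup (Fin d) ℝ,
      arcTC (fun t => projG hkd g (γ t)) 0 1 =
        ⨆ n, ENNReal.ofReal (dyTC (fun t => projG hkd g (γ t)) n) :=
    fun g => arcTC_eq _ ((projG_continuous hkd g).comp_continuousOn hγ)
  have hmap : ∀ (g : Matrix.orthogonalGroup (Fin d) ℝ) n,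
      dyTC (fun t => projG hkd g (γ t)) n =
        turnL (((List.range (2 ^ n + 1)).map fun j => γ (dy n j)).map (projG hkd g)) := by
    intro g n
    rw [dyTC, List.map_map]; rfl
  change arcTC γ 0 1 = ∫⁻ g, arcTC (fun t => projG hkd g (γ t)) 0 1 ∂μ
  rw [arcTC_eq γ hγ, lintegral_congr hproj, lintegral_iSup]
  · refine iSup_congr fun n => ?_
    simp only [hmap]
    rw [lint_turnL hkd μ hk hinv]
    rfl
  · intro n
    simp only [hmap]
    exact (measurable_turnL hkd _).ennreal_ofReal
  · intro n m hnm g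
    exact ENNReal.ofReal_le_ofReal (dyTC_mono _ hnm)
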